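/- arXiv:1604.05857 — 3 statements merged into one kernel-verified Lean document; each statement's English description precedes it below -/
import Mathlib

section
/- Let p be a prime and let A = ℤ_(p)[x₁, x₂, …]/(pⁿxₙ, xₙᵖ − pxₙ₊₁ : n ≥ 1) be graded with |xₙ| = 2pⁿ. Then for each t ≥ 1, the homogeneous component of A in degree 2pt is a cyclic ℤ_(p)-module isomorphic to ℤ/p^(v_p(t)+1), where v_p is the p-adic valuation, and A is zero in positive degrees not divisible by 2p. -/
open MvPolynomial

noncomputable section

instance spanIntP_isPrime (p : ℕ) [Fact p.Prime] : (Ideal.span {(p : ℤ)}).IsPrime := by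
  rw [Ideal.span_singleton_prime (by exact_mod_cast (Fact.out : p.Prime).ne_zero)]
  exact Nat.prime_iff_prime_int.mp (Fact.out : p.Prime)

/-- `ℤ_(p)`, the integers localized at the prime `p`. -/
abbrev Zloc (p : ℕ) [Fact p.Prime] := Localization.AtPrime (Ideal.span {(p : ℤ)})

/-- The ideal of relations `p^n xₙ = 0`, `xₙ^p = p xₙ₊₁` (for `n ≥ 1`), where the
variable `X n` of the polynomial ring stands for `xₙ₊₁`. -/
def relIdeal (p : ℕ) [Fact p.Prime] : Ideal (MvPolynomial ℕ (Zloc p)) :=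
  Ideal.span
    ((Set.range fun n : ℕ => (p : MvPolynomial ℕ (Zloc p)) ^ (n + 1) * X n) ∪
     (Set.range fun n : ℕ => X n ^ p - (p : MvPolynomial ℕ (Zloc p)) * X (n + 1)))

/-- `A = ℤ_(p)[x₁, x₂, …]/(pⁿxₙ, xₙᵖ − pxₙ₊₁)`. -/
abbrev Apx (p : ℕ) [Fact p.Prime] := MvPolynomial ℕ (Zloc p) ⧸ relIdeal p

/-- The homogeneous component of `A` in degree `d`, for the grading with `|xₙ| = 2pⁿ`. -/
def Acomp (p : ℕ) [Fact p.Prime] (d : ℕ) : Submodule (Zloc p) (Apx p) :=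
  (weightedHomogeneousSubmodule (Zloc p) (fun n : ℕ => 2 * p ^ (n + 1)) d).map
    (Ideal.Quotient.mkₐ (Zloc p) (relIdeal p)).toLinearMap

/-!
Up to `p`-local units, `xₙ₊₁` is the divided power `γ_(pⁿ) = x ^ (pⁿ) / (pⁿ)!`: the relations
`xₙᵖ = p xₙ₊₁` present the divided power algebra on one generator `x`, whose part of degree `t` is
spanned by `γ_t = x ^ t / t!`. There the relations `pⁿ⁺¹ γ_(pⁿ) = 0` amount to
`pⁿ⁺¹ * choose t (pⁿ) * γ_t = 0` for `pⁿ ≤ t`. Since `pⁿ * choose t (pⁿ)` is a multiple of `t`, and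
for `n = v_p(t)` has the same valuation as `t`, they generate just `p ^ (v_p(t) + 1) γ_t = 0`.
-/

section Weight

open Finsupp

lemma weight_comp_le_of_superadditive {σ : Type*} {f : ℕ → ℕ}
    (hf : ∀ m n, f m + f n ≤ f (m + n)) (w : σ → ℕ) (a : σ →₀ ℕ) :
    weight (f ∘ w) a ≤ f (weight w a) := by
  induction a using Finsupp.induction_linear with
  | zero => simp only [map_zero, zero_le]
  | add a b ha hb => simpa only [map_add] using (add_le_add ha hb).trans (hf _ _)
  | single i n =>
    rw [weight_single, weight_single, Function.comp_apply]
    induction n with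
    | zero => simp only [zero_smul, zero_le]
    | succ n ih =>
      simp only [add_smul, one_smul]
      exact (add_le_add_left ih _).trans (hf _ _)

/-- The shift `aᵢ ↦ aᵢ₊₁` of a finitely supported sequence, which drops its entry at `0`. -/
def dropZero {R : Type*} [AddCommMonoid R] : (ℕ →₀ R) →+ (ℕ →₀ R) :=
  comapDomain.addMonoidHom (add_left_injective 1)

lemma weight_eq_add_weight_dropZero {R M : Type*} [Semiring R] [AddCommMonoid M] [Module R M]
    (w : ℕ → M) (a : ℕ →₀ R) :
    weight w a = a 0 • w 0 + weight (fun i => w (i + 1)) (dropZero a) := by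
  have split : a = single 0 (a 0) + mapDomain (· + 1) (dropZero a) := by
    rw [dropZero, mapDomain_comapDomain_nat_add_one, single_add_erase]
  conv_lhs => rw [split, map_add, weight_single]
  congr 1
  exact linearCombination_mapDomain R _ _

end Weight

section Valuation

variable (p : ℕ)

/-- The number `∑ aᵢ pⁱ` whose base `p` digits are the `aᵢ`, provided that these are less than `p`.
It is the weight of the monomial `∏ (X i) ^ aᵢ` when `X i` has weight `pⁱ`. -/
def placeValue : (ℕ →₀ ℕ) →+ ℕ := Finsupp.weight fun i => p ^ i

/-- The `p`-adic valuation of `∏ (pⁱ)! ^ aᵢ`, the denominator of the product of divided powers that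
corresponds to the monomial `∏ (X i) ^ aᵢ`. -/
def factorialExponent : (ℕ →₀ ℕ) →+ ℕ := Finsupp.weight fun i => padicValNat p (p ^ i).factorial

lemma placeValue_single (i n : ℕ) : placeValue p (Finsupp.single i n) = n * p ^ i :=
  Finsupp.weight_single _ _ _

lemma factorialExponent_single (i n : ℕ) :
    factorialExponent p (Finsupp.single i n) = n * padicValNat p (p ^ i).factorial :=
  Finsupp.weight_single _ _ _

lemma placeValue_eq_add_mul_placeValue_dropZero (a : ℕ →₀ ℕ) :
    placeValue p a = a 0 + p * placeValue p (dropZero a) := by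
  simp only [placeValue, weight_eq_add_weight_dropZero _ a, Finsupp.weight_apply, Finsupp.mul_sum]
  simp [pow_succ', mul_left_comm]

variable {p}

lemma apply_eq_placeValue_div_pow_mod {a : ℕ →₀ ℕ} (ha : ∀ i, a i < p) (i : ℕ) :
    a i = placeValue p a / p ^ i % p := by
  have hp : 0 < p := (Nat.zero_le _).trans_lt (ha 0)
  rw [placeValue_eq_add_mul_placeValue_dropZero]
  induction i generalizing a with
  | zero => simp [Nat.mod_eq_of_lt (ha 0)]
  | succ i ih =>
    rw [pow_succ', ← Nat.div_div_eq_div_mul, Nat.add_mul_div_left _ _ hp,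
      Nat.div_eq_of_lt (ha 0), zero_add, placeValue_eq_add_mul_placeValue_dropZero]
    exact ih (a := dropZero a) fun j => ha (j + 1)

lemma placeValue_injOn : Set.InjOn (placeValue p) {a | ∀ i, a i < p} := fun a ha b hb h =>
  Finsupp.ext fun i => by
    rw [apply_eq_placeValue_div_pow_mod ha, h, ← apply_eq_placeValue_div_pow_mod hb]

lemma exists_mem_support_le_padicValNat_placeValue [Fact p.Prime] {a : ℕ →₀ ℕ}
    (ha : placeValue p a ≠ 0) : ∃ i ∈ a.support, i ≤ padicValNat p (placeValue p a) := by
  by_contra! h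
  refine pow_succ_padicValNat_not_dvd (p := p) ha ?_
  nth_rw 2 [placeValue]
  rw [Finsupp.weight_apply]
  exact Finset.dvd_sum fun i hi => (pow_dvd_pow p (h i hi)).mul_left _

variable (p) [Fact p.Prime]

lemma padicValNat_factorial_pow_succ (i : ℕ) : padicValNat p (p ^ (i + 1)).factorial =
    padicValNat p (p ^ i).factorial + p ^ i := by
  rw [pow_succ', padicValNat_factorial_mul]

lemma padicValNat_factorial_pow_succ' (i : ℕ) : padicValNat p (p ^ (i + 1)).factorial =
    p * padicValNat p (p ^ i).factorial + 1 := by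
  induction i with
  | zero =>
    rw [padicValNat_factorial_pow_succ, pow_zero, Nat.factorial_one, padicValNat_one_right,
      mul_zero]
  | succ i ih =>
    calc padicValNat p (p ^ (i + 2)).factorial
        = padicValNat p (p ^ (i + 1)).factorial + p ^ (i + 1) := padicValNat_factorial_pow_succ p _
      _ = p * (padicValNat p (p ^ i).factorial + p ^ i) + 1 := by rw [ih]; ring
      _ = p * padicValNat p (p ^ (i + 1)).factorial + 1 := by rw [padicValNat_factorial_pow_succ]

lemma padicValNat_factorial_add_le (m n : ℕ) :
    padicValNat p m.factorial + padicValNat p n.factorial ≤ padicValNat p (m + n).factorial := by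
  rw [← padicValNat.mul m.factorial_ne_zero n.factorial_ne_zero]
  exact (padicValNat_dvd_iff_le (Nat.factorial_ne_zero _)).mp
    (pow_padicValNat_dvd.trans (Nat.factorial_mul_factorial_dvd_factorial_add m n))

lemma add_mul_factorial_mul_factorial_dvd (m n : ℕ) :
    (m + n) * (m.factorial * n.factorial) ∣ n * (m + n).factorial := by
  cases n with
  | zero => simp
  | succ k =>
    rw [← add_assoc, Nat.factorial_succ, Nat.factorial_succ, mul_left_comm (k + 1),
      mul_left_comm m.factorial]
    gcongr
    exact Nat.factorial_mul_factorial_dvd_factorial_add m k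

lemma padicValNat_add_add_factorial_le (m : ℕ) {n : ℕ} (hn : n ≠ 0) :
    padicValNat p (m + n) + (padicValNat p m.factorial + padicValNat p n.factorial) ≤
      padicValNat p n + padicValNat p (m + n).factorial := by
  have hm := m.factorial_ne_zero
  have hmn := (m + n).factorial_ne_zero
  rw [← padicValNat.mul hm n.factorial_ne_zero, ← padicValNat.mul hn hmn,
    ← padicValNat.mul (by lia) (mul_ne_zero hm n.factorial_ne_zero)]
  exact (padicValNat_dvd_iff_le (mul_ne_zero hn hmn)).mp
    (pow_padicValNat_dvd.trans (add_mul_factorial_mul_factorial_dvd m n))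

lemma factorialExponent_le (a : ℕ →₀ ℕ) :
    factorialExponent p a ≤ padicValNat p (placeValue p a).factorial :=
  weight_comp_le_of_superadditive (padicValNat_factorial_add_le p) _ a

lemma factorialExponent_eq_factorialExponent_dropZero_add (a : ℕ →₀ ℕ) : factorialExponent p a =
    factorialExponent p (dropZero a) + placeValue p (dropZero a) := by
  simp only [factorialExponent, placeValue, weight_eq_add_weight_dropZero _ a,
    padicValNat_factorial_pow_succ, Finsupp.weight_apply, smul_add, Finsupp.sum_add]
  simp

variable {p}

lemma factorialExponent_eq_padicValNat_factorial {a : ℕ →₀ ℕ} (ha : ∀ i, a i < p) :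
    factorialExponent p a = padicValNat p (placeValue p a).factorial := by
  induction h : placeValue p a using Nat.strong_induction_on generalizing a with
  | _ t ih =>
    rcases t.eq_zero_or_pos with rfl | ht
    · simpa [h] using factorialExponent_le p a
    · have hp : 1 < p := (Fact.out : p.Prime).one_lt
      have split := placeValue_eq_add_mul_placeValue_dropZero p a
      have lt : placeValue p (dropZero a) < t := by nlinarith
      rw [factorialExponent_eq_factorialExponent_dropZero_add,
        ih _ lt (fun i => ha (i + 1)) rfl, ← h, split, add_comm (a 0),
        padicValNat_factorial_mul_add _ (ha 0), padicValNat_factorial_mul]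

end Valuation

section Presentation

variable (R : Type*) [CommRing R] (p : ℕ)

/-- The ideal of relations `pⁿ xₙ = 0` and `xₙᵖ = p xₙ₊₁` over an arbitrary base ring, with `X n`
standing for `xₙ₊₁`; over `Zloc p` it is `relIdeal p`. -/
def relationIdeal : Ideal (MvPolynomial ℕ R) :=
  Ideal.span
    ((Set.range fun n : ℕ => (p : MvPolynomial ℕ R) ^ (n + 1) * X n) ∪
     (Set.range fun n : ℕ => X n ^ p - (p : MvPolynomial ℕ R) * X (n + 1)))

/-- The homogeneous component of degree `d` of the quotient by `relationIdeal R p`, graded by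
`|xₙ| = 2pⁿ`; over `Zloc p` it is `Acomp p d`. -/
def gradedPiece (d : ℕ) : Submodule R (MvPolynomial ℕ R ⧸ relationIdeal R p) :=
  (weightedHomogeneousSubmodule R (fun n : ℕ => 2 * p ^ (n + 1)) d).map
    (Ideal.Quotient.mkₐ R (relationIdeal R p)).toLinearMap

/-- The class of a monomial modulo `relationIdeal R p`. -/
def monomialClass (a : ℕ →₀ ℕ) : MvPolynomial ℕ R ⧸ relationIdeal R p :=
  Ideal.Quotient.mk (relationIdeal R p) (monomial a 1)

lemma weight_two_mul_pow_succ (a : ℕ →₀ ℕ) :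
    Finsupp.weight (fun n : ℕ => 2 * p ^ (n + 1)) a = 2 * p * placeValue p a := by
  simp only [placeValue, Finsupp.weight_apply, Finsupp.mul_sum, smul_eq_mul]
  exact Finsupp.sum_congr fun i _ => by ring

lemma gradedPiece_eq_span (d : ℕ) : gradedPiece R p d =
    Submodule.span R (monomialClass R p '' {a | 2 * p * placeValue p a = d}) := by
  simp_rw [gradedPiece, weightedHomogeneousSubmodule_eq_finsupp_supported,
    AddMonoidAlgebra.supported_eq_span_single, Submodule.map_span, Set.image_image,
    weight_two_mul_pow_succ]
  rfl

lemma gradedPiece_eq_bot_of_not_dvd {d : ℕ} (hd : ¬ 2 * p ∣ d) : gradedPiece R p d = ⊥ := by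
  have empty : {a | 2 * p * placeValue p a = d} = ∅ :=
    Set.eq_empty_of_forall_notMem fun a ha => hd ⟨_, ha.symm⟩
  rw [gradedPiece_eq_span, empty, Set.image_empty, Submodule.span_empty]

lemma monomialClass_add (a b : ℕ →₀ ℕ) :
    monomialClass R p (a + b) = monomialClass R p a * monomialClass R p b := by
  simp only [monomialClass, ← map_mul, monomial_mul, mul_one]

lemma pow_smul_monomialClass_single (n : ℕ) :
    (p : R) ^ (n + 1) • monomialClass R p (Finsupp.single n 1) = 0 := by
  have mem : (p : R) ^ (n + 1) • (X n : MvPolynomial ℕ R) ∈ relationIdeal R p := by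
    rw [smul_eq_C_mul, map_pow, map_natCast]
    exact Ideal.subset_span (Or.inl ⟨n, rfl⟩)
  exact Ideal.Quotient.eq_zero_iff_mem.mpr mem

lemma monomialClass_single_self (n : ℕ) : monomialClass R p (Finsupp.single n p) =
    (p : R) • monomialClass R p (Finsupp.single (n + 1) 1) := by
  have mem : monomial (Finsupp.single n p) 1 - (p : R) • X (n + 1) ∈ relationIdeal R p := by
    rw [smul_eq_C_mul, map_natCast, ← X_pow_eq_monomial]
    exact Ideal.subset_span (Or.inr ⟨n, rfl⟩)
  exact Ideal.Quotient.eq.mpr mem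

lemma pow_smul_monomialClass_eq_zero [Fact p.Prime] {a : ℕ →₀ ℕ} (ha : placeValue p a ≠ 0) :
    (p : R) ^ (padicValNat p (placeValue p a) + 1) • monomialClass R p a = 0 := by
  obtain ⟨i, hi, hle⟩ := exists_mem_support_le_padicValNat_placeValue ha
  obtain ⟨c, hc⟩ := exists_add_of_le (Finsupp.single_le_iff.mpr
    (Nat.one_le_iff_ne_zero.mpr (Finsupp.mem_support_iff.mp hi)))
  obtain ⟨k, hk⟩ := Nat.exists_eq_add_of_le' hle
  rw [hk, hc, monomialClass_add, add_assoc, pow_add, mul_smul, ← smul_mul_assoc,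
    pow_smul_monomialClass_single, zero_mul, smul_zero]

lemma exists_monomialClass_eq_pow_smul (hp : 1 < p) (a : ℕ →₀ ℕ) :
    ∃ b : ℕ →₀ ℕ, (∀ i, b i < p) ∧ placeValue p b = placeValue p a ∧
      ∃ k : ℕ, monomialClass R p a = (p : R) ^ k • monomialClass R p b := by
  induction h : a.degree using Nat.strong_induction_on generalizing a with
  | _ d ih =>
    by_cases! ha : ∀ i, a i < p
    · exact ⟨a, ha, rfl, 0, by rw [pow_zero, one_smul]⟩
    · obtain ⟨i, hi⟩ := ha
      obtain ⟨c, rfl⟩ := exists_add_of_le (Finsupp.single_le_iff.mpr hi)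
      have carry_lt : (Finsupp.single (i + 1) 1 + c).degree < d := by
        simp only [← h, map_add, Finsupp.degree_single]
        lia
      obtain ⟨b, hb, hw, k, hk⟩ := ih _ carry_lt _ rfl
      refine ⟨b, hb, ?_, k + 1, ?_⟩
      · rw [hw, map_add, map_add, placeValue_single, placeValue_single, one_mul, pow_succ']
      · rw [monomialClass_add, monomialClass_single_self, smul_mul_assoc, ← monomialClass_add, hk,
          smul_smul, pow_succ']

variable {p}

lemma gradedPiece_eq_span_singleton (hp : 1 < p) {a : ℕ →₀ ℕ} (ha : ∀ i, a i < p) :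
    gradedPiece R p (2 * p * placeValue p a) = Submodule.span R {monomialClass R p a} := by
  rw [gradedPiece_eq_span]
  refine le_antisymm (Submodule.span_le.mpr ?_)
    (Submodule.span_mono (Set.singleton_subset_iff.mpr ⟨a, rfl, rfl⟩))
  rintro _ ⟨b, hb, rfl⟩
  obtain ⟨c, hc, hw, k, hk⟩ := exists_monomialClass_eq_pow_smul R p hp b
  obtain rfl : c = a :=
    placeValue_injOn hc ha (hw.trans (Nat.eq_of_mul_eq_mul_left (by lia) hb))
  exact Submodule.mem_span_singleton.mpr ⟨_, hk.symm⟩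

end Presentation

section DividedPowerCoeff

open scoped Pointwise in
lemma map_mem_of_mem_ideal_span {σ R M : Type*} [CommSemiring R] [AddCommMonoid M] [Module R M]
    {S : Set (MvPolynomial σ R)} {L : MvPolynomial σ R →ₗ[R] M} {N : Submodule R M}
    (h : ∀ a, ∀ s ∈ S, L (monomial a 1 * s) ∈ N) {f : MvPolynomial σ R} (hf : f ∈ Ideal.span S) :
    L f ∈ N := by
  have span_eq := Submodule.span_smul_of_span_eq_top (basisMonomials σ R).span_eq S
  have le : Submodule.span R (Set.range (basisMonomials σ R) • S) ≤ N.comap L := by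
    rw [Submodule.span_le]
    rintro _ ⟨_, ⟨a, rfl⟩, s, hs, rfl⟩
    simpa using h a s hs
  exact le (span_eq ▸ hf)

variable (R : Type*) [CommRing R] (p : ℕ)

/-- The coefficient of `x ^ t / p ^ v_p(t!)` under the substitution of
`x ^ (pⁱ) / p ^ v_p((pⁱ)!)` for `X i`. This takes integral values, and so makes sense over every
ring `R`; the exponent is a difference of naturals that never truncates, by
`factorialExponent_le`. -/
def dividedPowerCoeff (t : ℕ) : MvPolynomial ℕ R →ₗ[R] R :=
  (basisMonomials ℕ R).constr R fun a =>
    if placeValue p a = t then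
      (p : R) ^ (padicValNat p t.factorial - factorialExponent p a) else 0

lemma dividedPowerCoeff_monomial (t : ℕ) (a : ℕ →₀ ℕ) :
    dividedPowerCoeff R p t (monomial a 1) =
      if placeValue p a = t then
        (p : R) ^ (padicValNat p t.factorial - factorialExponent p a) else 0 :=
  (basisMonomials ℕ R).constr_basis R _ a

variable [Fact p.Prime]

lemma pow_dvd_dividedPowerCoeff_mul_pow_mul_X (t n : ℕ) (a : ℕ →₀ ℕ) :
    (p : R) ^ (padicValNat p t + 1) ∣
      dividedPowerCoeff R p t (monomial a 1 * ((p : MvPolynomial ℕ R) ^ (n + 1) * X n)) := by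
  have eq_smul : monomial a 1 * ((p : MvPolynomial ℕ R) ^ (n + 1) * X n) =
      (p : R) ^ (n + 1) • monomial (a + Finsupp.single n 1) 1 := by
    rw [smul_eq_C_mul, map_pow, map_natCast, X, mul_left_comm, monomial_mul, mul_one]
  rw [eq_smul, map_smul, dividedPowerCoeff_monomial, smul_eq_mul]
  split_ifs with ht
  · rw [← pow_add]
    refine pow_dvd_pow _ ?_
    have hpow : p ^ n ≠ 0 := pow_ne_zero n (Fact.out : p.Prime).ne_zero
    have bound := padicValNat_add_add_factorial_le p (placeValue p a) hpow
    have le := factorialExponent_le p a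
    rw [map_add, placeValue_single, one_mul] at ht
    rw [map_add, factorialExponent_single, one_mul]
    rw [ht, padicValNat.prime_pow] at bound
    lia
  · rw [mul_zero]
    exact dvd_zero _

lemma dividedPowerCoeff_mul_X_pow_sub (t n : ℕ) (a : ℕ →₀ ℕ) :
    dividedPowerCoeff R p t (monomial a 1 *
      (X n ^ p - (p : MvPolynomial ℕ R) * X (n + 1))) = 0 := by
  have eq_sub : monomial a 1 * (X n ^ p - (p : MvPolynomial ℕ R) * X (n + 1)) =
      monomial (a + Finsupp.single n p) 1 -
        (p : R) • monomial (a + Finsupp.single (n + 1) 1) 1 := by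
    rw [smul_eq_C_mul, map_natCast, X_pow_eq_monomial, X, mul_sub, mul_left_comm, monomial_mul,
      monomial_mul, mul_one]
  have placeValue_eq : placeValue p (a + Finsupp.single n p) =
      placeValue p (a + Finsupp.single (n + 1) 1) := by
    simp only [map_add, placeValue_single, pow_succ', one_mul]
  rw [eq_sub, map_sub, map_smul, dividedPowerCoeff_monomial, dividedPowerCoeff_monomial,
    placeValue_eq, smul_eq_mul, sub_eq_zero]
  split_ifs with ht
  · rw [← pow_succ']
    congr 1
    have le := factorialExponent_le p (a + Finsupp.single (n + 1) 1)
    rw [ht] at le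
    simp only [map_add, factorialExponent_single, one_mul, padicValNat_factorial_pow_succ'] at le ⊢
    lia
  · rw [mul_zero]

lemma pow_dvd_dividedPowerCoeff_of_mem {f : MvPolynomial ℕ R} (hf : f ∈ relationIdeal R p)
    (t : ℕ) : (p : R) ^ (padicValNat p t + 1) ∣ dividedPowerCoeff R p t f := by
  rw [← Ideal.mem_span_singleton]
  refine map_mem_of_mem_ideal_span (fun a s hs => ?_) hf
  rw [Ideal.mem_span_singleton]
  rcases hs with ⟨n, rfl⟩ | ⟨n, rfl⟩
  · exact pow_dvd_dividedPowerCoeff_mul_pow_mul_X R p t n a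
  · rw [dividedPowerCoeff_mul_X_pow_sub]
    exact dvd_zero _

variable {p}

lemma torsionOf_monomialClass {a : ℕ →₀ ℕ} (ha : ∀ i, a i < p) (h0 : placeValue p a ≠ 0) :
    Ideal.torsionOf R _ (monomialClass R p a) =
      Ideal.span {(p : R) ^ (padicValNat p (placeValue p a) + 1)} := by
  refine le_antisymm (fun r hr => ?_) ?_
  · have mem : r • monomial a 1 ∈ relationIdeal R p := Ideal.Quotient.eq_zero_iff_mem.mp hr
    have dvd := pow_dvd_dividedPowerCoeff_of_mem R p mem (placeValue p a)
    rwa [map_smul, dividedPowerCoeff_monomial, if_pos rfl,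
      factorialExponent_eq_padicValNat_factorial ha, Nat.sub_self, pow_zero, smul_eq_mul, mul_one,
      ← Ideal.mem_span_singleton] at dvd
  · rw [Ideal.span_singleton_le_iff_mem, Ideal.mem_torsionOf_iff]
    exact pow_smul_monomialClass_eq_zero R p h0

end DividedPowerCoeff

theorem stmt_0_general (R : Type*) [CommRing R] (p : ℕ) [Fact p.Prime] :
    (∀ t : ℕ, 1 ≤ t → Nonempty (gradedPiece R p (2 * p * t) ≃ₗ[R]
      R ⧸ Ideal.span {(p : R) ^ (padicValNat p t + 1)})) ∧
    (∀ d : ℕ, ¬ (2 * p) ∣ d → gradedPiece R p d = ⊥) := by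
  refine ⟨fun t ht => ?_, fun d => gradedPiece_eq_bot_of_not_dvd R p⟩
  have hp : 1 < p := (Fact.out : p.Prime).one_lt
  obtain ⟨a, ha, hw, -⟩ := exists_monomialClass_eq_pow_smul R p hp (Finsupp.single 0 t)
  obtain rfl : placeValue p a = t := by rw [hw, placeValue_single, pow_zero, mul_one]
  rw [gradedPiece_eq_span_singleton R hp ha, ← torsionOf_monomialClass R ha (by lia)]
  exact ⟨(Ideal.quotTorsionOfEquivSpanSingleton R _ _).symm⟩

instance spanIntP_isMaximal (p : ℕ) [Fact p.Prime] : (Ideal.span {(p : ℤ)}).IsMaximal :=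
  Int.ideal_span_isMaximal_of_prime p

/-- `ℤ_(p) / p ^ k` is `ℤ / p ^ k`. -/
def zlocQuotientSpanPowEquivZMod (p : ℕ) [Fact p.Prime] (k : ℕ) :
    Zloc p ⧸ Ideal.span {(p : Zloc p) ^ k} ≃+* ZMod (p ^ k) :=
  have maximalIdeal_pow :
      IsLocalRing.maximalIdeal (Zloc p) ^ k = Ideal.span {(p : Zloc p) ^ k} := by
    rw [← Localization.AtPrime.map_eq_maximalIdeal, Ideal.map_span, Set.image_singleton,
      Ideal.span_singleton_pow, map_natCast]
  have span_pow : Ideal.span {(p : ℤ)} ^ k = Ideal.span {((p ^ k : ℕ) : ℤ)} := by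
    rw [Ideal.span_singleton_pow, Nat.cast_pow]
  (Ideal.quotEquivOfEq maximalIdeal_pow.symm).trans <|
    (IsLocalization.AtPrime.equivQuotMaximalIdealPow (Ideal.span {(p : ℤ)}) (Zloc p)
      k).symm.toRingEquiv.trans <|
    (Ideal.quotEquivOfEq span_pow).trans (Int.quotientSpanNatEquivZMod (p ^ k))

/-- For each `t ≥ 1` the homogeneous component of `A` in degree `2pt` is a cyclic
`ℤ_(p)`-module isomorphic to `ℤ/p^(v_p(t)+1)`, and `A` vanishes in positive degrees
not divisible by `2p`. -/
theorem stmt_0 (p : ℕ) [Fact p.Prime] :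
    (∀ t : ℕ, 1 ≤ t →
       Nonempty (Acomp p (2 * p * t) ≃+ ZMod (p ^ (padicValNat p t + 1)))) ∧
    (∀ d : ℕ, 0 < d → ¬ (2 * p) ∣ d → Acomp p d = ⊥) := by
  exact ⟨fun t ht => ((stmt_0_general (Zloc p) p).1 t ht).map fun e =>
      e.toAddEquiv.trans (zlocQuotientSpanPowEquivZMod p _).toAddEquiv,
    fun d _ => (stmt_0_general (Zloc p) p).2 d⟩

end
end

section
/- Let A = ku_*[ũ]/(ũ² − u²) where ku_* = ℤ[u], with augmentation ε: A → ku_*, ũ ↦ u. Then Tor^A_0(ku_*, ku_*) ≅ ku_*, Tor^A_{2j}(ku_*, ku_*) = 0 for j > 0, and Tor^A_{2j+1}(ku_*, ku_*) ≅ ku_*/(2u) for all j ≥ 0. -/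
open CategoryTheory Polynomial

noncomputable section

/-- `Tor_n^B(M, N)` for `B`-modules `M`, `N`. -/
def TorGroup (B : Type) [CommRing B] (n : ℕ) (M N : ModuleCat B) : ModuleCat B :=
  ((Tor (ModuleCat B) n).obj M).obj N

/-- `A = ku_*[ũ]/(ũ² − u²)` where `ku_* = ℤ[u]`; the outer variable `X` is `ũ` and
`C u` is `u`. -/
abbrev Aku : Type :=
  Polynomial (Polynomial ℤ) ⧸
    Ideal.span {(X : Polynomial (Polynomial ℤ)) ^ 2 - (C (X : Polynomial ℤ)) ^ 2}

/-- `ku_* = ℤ[u]` as an `A`-module via the augmentation `ε : A → ku_*`, `ũ ↦ u`,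
realized as `A/(ũ − u)`. -/
abbrev kuAug : ModuleCat Aku :=
  ModuleCat.of Aku
    (Aku ⧸ Ideal.span {(Ideal.Quotient.mk _
      ((X : Polynomial (Polynomial ℤ)) - C (X : Polynomial ℤ)) : Aku)})

/-- `ku_*/(2u)` as an `A`-module, realized as `A/(ũ − u, 2u)`. -/
abbrev kuMod2u : ModuleCat Aku :=
  ModuleCat.of Aku
    (Aku ⧸ Ideal.span
      {(Ideal.Quotient.mk _
          ((X : Polynomial (Polynomial ℤ)) - C (X : Polynomial ℤ)) : Aku),
       (Ideal.Quotient.mk _ (C (2 * (X : Polynomial ℤ))) : Aku)})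

/-!
The polynomials `X - c` and `X + c` are regular, so in the quotient by their product `X² - c²` each
generates the annihilator of the other. Multiplication by them in turn therefore gives a 2-periodic
free resolution of the quotient by `X - c`. On that quotient `X - c` acts as `0` and `X + c` as the
regular element `2c`, so after tensoring the homology is the cokernel of `2c` in odd degrees and
vanishes in positive even degrees.
-/

universe u

section PeriodicComplex

open HomologicalComplex

variable {R C D : Type*} [CommRing R] [Category* C] [Category* D]

section Preadditive

variable [Preadditive C] [Linear R C] [Preadditive D] [Linear R D] (A : C) {a b : R}

lemma smul_id_comp_smul_id (h : a * b = 0) : (a • 𝟙 A) ≫ (b • 𝟙 A) = 0 := by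
  rw [Linear.smul_comp, Linear.comp_smul, smul_smul, h, zero_smul]

/-- The short complex `A ⟶ A ⟶ A` of multiplication by `a` followed by multiplication by `b`; these
compute the homology of `periodicComplex`. -/
abbrev smulShortComplex (h : a * b = 0) : ShortComplex C :=
  ShortComplex.mk (a • 𝟙 A) (b • 𝟙 A) (smul_id_comp_smul_id A h)

/-- The 2-periodic complex `⋯ ⟶ A ⟶ A ⟶ A` whose differential is multiplication by `a` out of the
odd degrees and by `b` out of the positive even ones. -/
def periodicComplex (h : a * b = 0) : ChainComplex C ℕ :=
  alternatingConst A (φ := b • 𝟙 A) (ψ := a • 𝟙 A)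
    (smul_id_comp_smul_id A (mul_comm a b ▸ h)) (smul_id_comp_smul_id A h)
    fun _ _ => ComplexShape.down_nat_odd_add

lemma periodicComplex_d_of_even (h : a * b = 0) {n : ℕ} (hn : Even n) :
    (periodicComplex A h).d (n + 1) n = a • 𝟙 A := by
  have : ¬ Even (n + 1) := by simpa [Nat.even_add_one] using hn
  simp [periodicComplex, alternatingConst, this]

lemma periodicComplex_d_of_odd (h : a * b = 0) {n : ℕ} (hn : Odd n) :
    (periodicComplex A h).d (n + 1) n = b • 𝟙 A := by
  simp [periodicComplex, alternatingConst, hn.add_one]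

/-- An `R`-linear functor sends the periodic complex on an object to the periodic complex on its
image. -/
def mapPeriodicComplexIso (F : C ⥤ D) [F.Additive] [F.Linear R] {A : C} {B : D}
    (e : F.obj A ≅ B) (h : a * b = 0) :
    (F.mapHomologicalComplex _).obj (periodicComplex A h) ≅ periodicComplex B h :=
  Hom.isoOfComponents (fun _ => e) (by
    rintro _ n rfl
    have hcomm (r : R) : e.hom ≫ (r • 𝟙 B) = F.map (r • 𝟙 A) ≫ e.hom := by simp [F.map_smul]
    change e.hom ≫ (periodicComplex B h).d (n + 1) n =
      F.map ((periodicComplex A h).d (n + 1) n) ≫ e.hom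
    rcases Nat.even_or_odd n with hn | hn
    · rw [periodicComplex_d_of_even A h hn, periodicComplex_d_of_even B h hn]
      exact hcomm a
    · rw [periodicComplex_d_of_odd A h hn, periodicComplex_d_of_odd B h hn]
      exact hcomm b)

lemma periodicComplex_exactAt_iff_of_odd (h : a * b = 0) {n : ℕ} (hn : Odd n) :
    (periodicComplex A h).ExactAt n ↔ (smulShortComplex A (mul_comm a b ▸ h)).Exact := by
  obtain ⟨n, rfl⟩ := Nat.exists_eq_add_one.2 hn.pos
  rw [exactAt_iff' _ (n + 2) (n + 1) n (by simp) (by simp)]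
  exact ShortComplex.exact_iff_of_iso (alternatingConstScIsoOdd _ _ _ _ (by simp) (by simp) hn)

lemma periodicComplex_exactAt_iff_of_even (h : a * b = 0) {n : ℕ} (hn : Even n) (hn₀ : n ≠ 0) :
    (periodicComplex A h).ExactAt n ↔ (smulShortComplex A h).Exact := by
  obtain ⟨n, rfl⟩ := Nat.exists_eq_add_one_of_ne_zero hn₀
  rw [exactAt_iff' _ (n + 2) (n + 1) n (by simp) (by simp)]
  exact ShortComplex.exact_iff_of_iso (alternatingConstScIsoEven _ _ _ _ (by simp) (by simp) hn)

lemma periodicComplex_exactAt_of_mono [Limits.HasZeroObject C] (h : a * b = 0)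
    [Mono (b • 𝟙 A)] {n : ℕ} (hn : Even n) (hn₀ : n ≠ 0) : (periodicComplex A h).ExactAt n := by
  rw [periodicComplex_exactAt_iff_of_even A h hn hn₀,
    ShortComplex.exact_iff_mono _ (Limits.zero_of_comp_mono (b • 𝟙 A) (smul_id_comp_smul_id A h))]
  infer_instance

end Preadditive

section Abelian

variable [Abelian C] [Linear R C] {A B : C} {a b : R}

/-- The augmentation of the periodic complex on `A` induced by a morphism `A ⟶ B` that is killed
by `a`. -/
def periodicAugmentation (h : a * b = 0) (π : A ⟶ B) (hπ : (a • 𝟙 A) ≫ π = 0) :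
    periodicComplex A h ⟶ (ChainComplex.single₀ C).obj B :=
  (ChainComplex.toSingle₀Equiv _ _).symm
    ⟨π, by rw [periodicComplex_d_of_even A h Even.zero]; exact hπ⟩

lemma periodicAugmentation_f_zero (h : a * b = 0) (π : A ⟶ B) (hπ : (a • 𝟙 A) ≫ π = 0) :
    (periodicAugmentation h π hπ).f 0 = π :=
  ChainComplex.toSingle₀Equiv_symm_apply_f_zero _ _

lemma quasiIso_periodicAugmentation {h : a * b = 0} {π : A ⟶ B} {hπ : (a • 𝟙 A) ≫ π = 0}
    (hab : (smulShortComplex A h).Exact)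
    (hba : (smulShortComplex A (mul_comm a b ▸ h)).Exact)
    (hπ_exact : (ShortComplex.mk _ π hπ).Exact) [Epi π] :
    QuasiIso (periodicAugmentation h π hπ) where
  quasiIsoAt n := by
    rcases eq_or_ne n 0 with rfl | hn₀
    · rw [ChainComplex.quasiIsoAt₀_iff, ShortComplex.quasiIso_iff_of_zeros' _ rfl rfl rfl]
      have hd := periodicComplex_d_of_even A h Even.zero
      have hf := periodicAugmentation_f_zero h π hπ
      constructor
      · exact (ShortComplex.exact_iff_of_iso (S₂ := ShortComplex.mk (a • 𝟙 A) π hπ)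
          (ShortComplex.isoMk (Iso.refl A) (Iso.refl A) (Iso.refl B)
            ((Category.id_comp _).trans (hd.symm.trans (Category.comp_id _).symm))
            ((Category.id_comp _).trans (hf.symm.trans (Category.comp_id _).symm)))).2 hπ_exact
      · change Epi ((periodicAugmentation h π hπ).f 0)
        rwa [hf]
    · obtain ⟨m, rfl⟩ := Nat.exists_eq_add_one_of_ne_zero hn₀
      rw [quasiIsoAt_iff_exactAt' (hL := ChainComplex.exactAt_succ_single_obj ..)]
      rcases Nat.even_or_odd (m + 1) with hn | hn
      · exact (periodicComplex_exactAt_iff_of_even A h hn hn₀).2 hab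
      · exact (periodicComplex_exactAt_iff_of_odd A h hn).2 hba

end Abelian

end PeriodicComplex

section ExactPair

variable {R : Type u} [CommRing R] {a b : R}

/-- An exact pair of zero divisors: each of `a` and `b` generates the annihilator of the other.
This is what makes the periodic complex on `R` a resolution of `R ⧸ (a)`. -/
structure IsExactPair (a b : R) : Prop where
  mul_left_eq_zero_iff (x : R) : a * x = 0 ↔ b ∣ x
  mul_right_eq_zero_iff (x : R) : b * x = 0 ↔ a ∣ x

lemma smul_id_comp_mkQ (a : R) :
    (a • 𝟙 (ModuleCat.of R R)) ≫ ModuleCat.ofHom (Submodule.mkQ (Ideal.span {a})) = 0 := by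
  ext
  exact (Submodule.Quotient.mk_eq_zero _).2 (Ideal.mem_span_singleton.2 (dvd_mul_right a 1))

lemma smul_id_mkQ_exact (a : R) : (ShortComplex.mk _ _ (smul_id_comp_mkQ a)).Exact := by
  rw [ShortComplex.moduleCat_exact_iff]
  intro x hx
  obtain ⟨y, rfl⟩ := Ideal.mem_span_singleton.1 ((Submodule.Quotient.mk_eq_zero _).1 hx)
  exact ⟨y, rfl⟩

namespace IsExactPair

lemma symm (h : IsExactPair a b) : IsExactPair b a :=
  ⟨h.mul_right_eq_zero_iff, h.mul_left_eq_zero_iff⟩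

lemma mul_eq_zero (h : IsExactPair a b) : a * b = 0 :=
  (h.mul_left_eq_zero_iff b).2 dvd_rfl

lemma smulShortComplex_exact (h : IsExactPair a b) :
    (smulShortComplex (ModuleCat.of R R) h.mul_eq_zero).Exact := by
  rw [ShortComplex.moduleCat_exact_iff]
  intro x hx
  obtain ⟨y, rfl⟩ := (h.mul_right_eq_zero_iff x).1 hx
  exact ⟨y, rfl⟩

/-- The periodic free resolution of `R ⧸ (a)` attached to an exact pair. -/
def periodicResolution (h : IsExactPair a b) :
    ProjectiveResolution (ModuleCat.of R (R ⧸ Ideal.span {a})) where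
  complex := periodicComplex (ModuleCat.of R R) h.mul_eq_zero
  projective _ := inferInstanceAs (Projective (ModuleCat.of R R))
  π := periodicAugmentation h.mul_eq_zero (ModuleCat.ofHom (Submodule.mkQ (Ideal.span {a})))
    (smul_id_comp_mkQ a)
  quasiIso := by
    have : Epi (ModuleCat.ofHom (Submodule.mkQ (Ideal.span {a}))) :=
      (ModuleCat.epi_iff_surjective _).2 (Submodule.mkQ_surjective _)
    exact quasiIso_periodicAugmentation h.smulShortComplex_exact h.symm.smulShortComplex_exact
      (smul_id_mkQ_exact a)

end IsExactPair

end ExactPair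

section Tor

open MonoidalCategory

variable {R : Type u} [CommRing R] {a b : R}

/-- `Tor_0(M, R ⧸ I)` is `M` itself when `I` kills `M`. -/
def torZeroQuotientIso (M : ModuleCat.{u} R) {I : Ideal R} (hI : I ≤ Module.annihilator R M) :
    ((Tor (ModuleCat R) 0).obj M).obj (ModuleCat.of R (R ⧸ I)) ≅ M :=
  ((tensoringLeft (ModuleCat R)).obj M).leftDerivedZeroIsoSelf.app _ ≪≫
    (TensorProduct.tensorQuotEquivQuotSMul M I ≪≫ₗ Submodule.quotEquivOfEqBot _
      (by rwa [← Submodule.le_annihilator_iff, Submodule.annihilator_top])).toModuleIso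

namespace IsExactPair

/-- Tensoring the periodic resolution with `M` identifies `Tor` with the homology of the periodic
complex on `M`. -/
def torIso (h : IsExactPair a b) (M : ModuleCat.{u} R) (n : ℕ) :
    ((Tor (ModuleCat R) n).obj M).obj (ModuleCat.of R (R ⧸ Ideal.span {a})) ≅
      (periodicComplex M h.mul_eq_zero).homology n :=
  h.periodicResolution.isoLeftDerivedObj ((tensoringLeft (ModuleCat R)).obj M) n ≪≫
    (HomologicalComplex.homologyFunctor _ _ n).mapIso
      (mapPeriodicComplexIso ((tensoringLeft (ModuleCat R)).obj M) (ρ_ M) h.mul_eq_zero)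

lemma isZero_tor_of_even (h : IsExactPair a b) {M : ModuleCat.{u} R} (hb : IsSMulRegular M b)
    {n : ℕ} (hn : Even n) (hn₀ : n ≠ 0) :
    Limits.IsZero
      (((Tor (ModuleCat R) n).obj M).obj (ModuleCat.of R (R ⧸ Ideal.span {a}))) := by
  have : Mono (b • 𝟙 M) := (ModuleCat.mono_iff_injective _).2 hb
  exact (periodicComplex_exactAt_of_mono M h.mul_eq_zero hn hn₀).isZero_homology.of_iso
    (h.torIso M n)

/-- In odd degrees, `Tor` is the cokernel of `b` on a module killed by `a`. -/
def torOddIso (h : IsExactPair a b) {M : ModuleCat.{u} R} (ha : a ∈ Module.annihilator R M)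
    {n : ℕ} (hn : Odd n) :
    ((Tor (ModuleCat R) n).obj M).obj (ModuleCat.of R (R ⧸ Ideal.span {a})) ≅
      ModuleCat.of R (QuotSMulTop b M) :=
  h.torIso M n ≪≫
    HomologicalComplex.alternatingConstHomologyIsoOdd _ _ _ _
      (by simp) (by obtain ⟨k, rfl⟩ := hn; simp) hn ≪≫
    ShortComplex.asIsoHomologyι _ (by ext x; exact Module.mem_annihilator.1 ha x) ≪≫
    ShortComplex.moduleCatOpcyclesIso _ ≪≫
    (Submodule.quotEquivOfEq _ _ (by
      ext x
      simp [Submodule.mem_smul_pointwise_iff_exists])).toModuleIso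

end IsExactPair

end Tor

section Quotient

variable {R : Type*} [CommRing R]

/-- `(R ⧸ I) / b (R ⧸ I)` is `R ⧸ (I + (b))`. -/
def quotSMulTopQuotientEquiv (I : Ideal R) (b : R) :
    QuotSMulTop b (R ⧸ I) ≃ₗ[R] R ⧸ I ⊔ Ideal.span {b} :=
  Submodule.quotEquivOfEq _ _ (by
    rw [← (Ideal.span {b}).mul_top, ← smul_eq_mul, Submodule.ideal_span_singleton_smul,
      Submodule.map_pointwise_smul, Submodule.map_top, Submodule.range_mkQ]) ≪≫ₗ
  Submodule.quotientQuotientEquivQuotientSup I (Ideal.span {b})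

lemma quotient_mk_dvd_mk_iff {I : Ideal R} {f x : R} (hI : I ≤ Ideal.span {f}) :
    Ideal.Quotient.mk I f ∣ Ideal.Quotient.mk I x ↔ f ∣ x := by
  refine ⟨?_, map_dvd _⟩
  rintro ⟨y, hy⟩
  obtain ⟨y, rfl⟩ := Ideal.Quotient.mk_surjective y
  rw [← map_mul, Ideal.Quotient.eq] at hy
  exact (dvd_sub_left (dvd_mul_right f y)).1 (Ideal.mem_span_singleton.1 (hI hy))

open nonZeroDivisors in
lemma isExactPair_quotient_mk {f g : R} (hf : f ∈ R⁰) (hg : g ∈ R⁰) {p : R} (hp : p = f * g) :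
    IsExactPair (Ideal.Quotient.mk (Ideal.span {p}) f) (Ideal.Quotient.mk (Ideal.span {p}) g) := by
  have hpf : Ideal.span {p} ≤ Ideal.span {f} := Ideal.span_singleton_le_span_singleton.2 ⟨g, hp⟩
  have hpg : Ideal.span {p} ≤ Ideal.span {g} :=
    Ideal.span_singleton_le_span_singleton.2 ⟨f, hp.trans (mul_comm f g)⟩
  constructor <;> intro x <;> obtain ⟨x, rfl⟩ := Ideal.Quotient.mk_surjective x
  · rw [← map_mul, Ideal.Quotient.eq_zero_iff_dvd, quotient_mk_dvd_mk_iff hpg, hp,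
      dvd_cancel_left_mem_nonZeroDivisors hf]
  · rw [← map_mul, Ideal.Quotient.eq_zero_iff_dvd, quotient_mk_dvd_mk_iff hpf, hp, mul_comm f,
      dvd_cancel_left_mem_nonZeroDivisors hg]

end Quotient

section SqrtExtension

open nonZeroDivisors

variable {S : Type u} [CommRing S] (c : S)

/-- The extension `S[X] / (X² − c²)` of `S` by a square root of `c²`. -/
abbrev SqrtExtension : Type u := S[X] ⧸ Ideal.span {(X : S[X]) ^ 2 - C c ^ 2}

/-- `S` as a module over `SqrtExtension c` via the augmentation `X ↦ c`, encoded like `kuAug` as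
the quotient by `X - c`. -/
abbrev augmentationModule : ModuleCat.{u} (SqrtExtension c) :=
  ModuleCat.of _ (SqrtExtension c ⧸ Ideal.span {(Ideal.Quotient.mk _ (X - C c) : SqrtExtension c)})

lemma isExactPair_mk_X_sub_C_mk_X_add_C :
    IsExactPair (Ideal.Quotient.mk _ (X - C c) : SqrtExtension c)
      (Ideal.Quotient.mk _ (X + C c)) :=
  isExactPair_quotient_mk (monic_X_sub_C c).mem_nonZeroDivisors
    (monic_X_add_C c).mem_nonZeroDivisors (by ring)

lemma X_sub_C_dvd_of_dvd_X_add_C_mul {c : S} (hc : 2 * c ∈ S⁰) {p : S[X]}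
    (hp : X - C c ∣ (X + C c) * p) : X - C c ∣ p := by
  rw [dvd_iff_isRoot, IsRoot.def, eval_mul, eval_add, eval_X, eval_C, ← two_mul] at hp
  exact dvd_iff_isRoot.2 ((mul_left_mem_nonZeroDivisors_eq_zero_iff hc).1 hp)

lemma isSMulRegular_augmentationModule {c : S} (hc : 2 * c ∈ S⁰) :
    IsSMulRegular (augmentationModule c) (Ideal.Quotient.mk _ (X + C c) : SqrtExtension c) := by
  have hle : Ideal.span {(X : S[X]) ^ 2 - C c ^ 2} ≤ Ideal.span {X - C c} :=
    Ideal.span_singleton_le_span_singleton.2 ⟨X + C c, by ring⟩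
  refine (isSMulRegular_quotient_iff_mem_of_smul_mem _ _).2 fun x hx => ?_
  obtain ⟨p, rfl⟩ := Ideal.Quotient.mk_surjective x
  rw [smul_eq_mul, ← map_mul, Ideal.mem_span_singleton, quotient_mk_dvd_mk_iff hle] at hx
  exact Ideal.mem_span_singleton.2 (map_dvd _ (X_sub_C_dvd_of_dvd_X_add_C_mul hc hx))

lemma span_X_sub_C_sup_span_X_add_C :
    Ideal.span {(Ideal.Quotient.mk _ (X - C c) : SqrtExtension c)} ⊔
        Ideal.span {Ideal.Quotient.mk _ (X + C c)} =
      Ideal.span {Ideal.Quotient.mk _ (X - C c), Ideal.Quotient.mk _ (C (2 * c))} := by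
  have hadd : (Ideal.Quotient.mk _ (X + C c) : SqrtExtension c) =
      Ideal.Quotient.mk _ (C (2 * c)) + 1 * Ideal.Quotient.mk _ (X - C c) := by
    rw [one_mul, ← map_add, two_mul, C_add]
    ring_nf
  rw [← Ideal.span_insert, hadd, Ideal.span_pair_add_mul_left]

theorem stmt_6_general (hc : 2 * c ∈ S⁰) :
    Nonempty (((Tor (ModuleCat (SqrtExtension c)) 0).obj (augmentationModule c)).obj
      (augmentationModule c) ≅ augmentationModule c) ∧
    (∀ j : ℕ, 0 < j → Subsingleton (((Tor (ModuleCat (SqrtExtension c)) (2 * j)).obj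
      (augmentationModule c)).obj (augmentationModule c))) ∧
    (∀ j : ℕ, Nonempty (((Tor (ModuleCat (SqrtExtension c)) (2 * j + 1)).obj
      (augmentationModule c)).obj (augmentationModule c) ≅
        ModuleCat.of _ (SqrtExtension c ⧸ Ideal.span
          {(Ideal.Quotient.mk _ (X - C c) : SqrtExtension c),
            Ideal.Quotient.mk _ (C (2 * c))}))) := by
  have hpair := isExactPair_mk_X_sub_C_mk_X_add_C c
  have hann := (Ideal.annihilator_quotient (I := Ideal.span
    {(Ideal.Quotient.mk _ (X - C c) : SqrtExtension c)})).ge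
  refine ⟨⟨torZeroQuotientIso _ hann⟩, fun j hj => ?_, fun j => ⟨?_⟩⟩
  · exact ModuleCat.isZero_iff_subsingleton.1 <|
      hpair.isZero_tor_of_even (isSMulRegular_augmentationModule hc) (even_two_mul j) (by lia)
  · exact hpair.torOddIso (hann (Ideal.mem_span_singleton_self _)) (odd_two_mul_add_one j) ≪≫
      (quotSMulTopQuotientEquiv _ _ ≪≫ₗ
        Submodule.quotEquivOfEq _ _ (span_X_sub_C_sup_span_X_add_C c)).toModuleIso

end SqrtExtension

/-- For `A = ku_*[ũ]/(ũ² − u²)` with augmentation `ũ ↦ u`: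
`Tor^A_0(ku_*, ku_*) ≅ ku_*`, `Tor^A_{2j}(ku_*, ku_*) = 0` for `j > 0`, and
`Tor^A_{2j+1}(ku_*, ku_*) ≅ ku_*/(2u)` for all `j ≥ 0`. -/
theorem stmt_6 :
    Nonempty (TorGroup Aku 0 kuAug kuAug ≅ kuAug) ∧
    (∀ j : ℕ, 0 < j → Subsingleton (TorGroup Aku (2 * j) kuAug kuAug)) ∧
    (∀ j : ℕ, Nonempty (TorGroup Aku (2 * j + 1) kuAug kuAug ≅ kuMod2u)) :=
  stmt_6_general X (by simp)

end
end

section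
/- Let p be a prime and define ỹ_t for t ≥ 1 with p-adic expansion t = t₀ + t₁p + ⋯ + t_n pⁿ by ỹ_t = ỹ₁^{t₀} ỹ_p^{t₁} ⋯ ỹ_{pⁿ}^{t_n} in the ring A = ℤ_(p)[x₁, x₂, …]/(pⁿxₙ, xₙᵖ − pxₙ₊₁), where ỹ_{p^v} is interpreted as the generator in degree 2p^{v+1}. Then the annihilator of ỹ_t in A is (p^{v_p(t)+1}), i.e., p^{v_p(t)+1} ỹ_t = 0 and p^{v_p(t)} ỹ_t ≠ 0. -/
open MvPolynomial

noncomputable section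

/-- `ỹ_t = ∏_v ỹ_{p^v}^{t_v}` where `t = Σ t_v p^v` is the `p`-adic expansion and
`ỹ_{p^v} = x_{v+1}` is the variable `X v`; the `v`-th digit of `t` is `t / p^v % p`. -/
def ytil (p : ℕ) [Fact p.Prime] (t : ℕ) : Apx p :=
  Ideal.Quotient.mk (relIdeal p)
    (∏ v ∈ Finset.range (t + 1), X v ^ (t / p ^ v % p))

/-! With `v = v_p(t)`, the digit `t_v` is nonzero, so `x_{v+1}` divides `ỹ_t` and `p^(v+1)` kills
it. That `p^v` does not is detected in the algebra `Γ` on the divided powers `X^m / m!`. Up to a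
unit of `ℤ_(p)`, the `m`-th divided power is `w_m = X^m / p^(v_p(m!))`, and Legendre's formula gives
the relations `w_m^p = p w_{pm}` for `m` a power of `p`, `w₁ w_{m-1} = p^(v_p(m)) w_m`, and
`w_t = ∏ w_{p^v}^{t_v}`. Hence `x_{n+1} ↦ w_{p^n}` induces a ring map `A → Γ / (p w₁)` that sends
`ỹ_t` to `w_t`. If `p^v w_t = w₁ w_{t-1}` were in `(p w₁)`, then `p` would divide `w_{t-1}`, because
`Γ` is a domain; this is impossible since the divided powers form a basis of `Γ`. -/

open Polynomial (monomial)
open scoped Nat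

theorem sum_range_pow_mul_digit (b t N : ℕ) :
    ∑ v ∈ Finset.range N, b ^ v * (t / b ^ v % b) = t % b ^ N := by
  induction N with
  | zero => simp [Nat.mod_one]
  | succ N ih => rw [Finset.sum_range_succ, ih, Nat.mod_pow_succ]

section FactorialValuation

variable (p : ℕ) [Fact p.Prime]

theorem padicValNat_factorial_succ (n : ℕ) :
    padicValNat p (n + 1)! = padicValNat p (n + 1) + padicValNat p n ! := by
  rw [Nat.factorial_succ, padicValNat.mul n.succ_ne_zero n.factorial_ne_zero]

theorem padicValNat_factorial_pow_mul (N q : ℕ) :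
    padicValNat p (p ^ N * q)! = padicValNat p (p ^ N)! * q + padicValNat p q ! := by
  induction N with
  | zero => simp
  | succ N ih =>
    rw [pow_succ', mul_assoc, padicValNat_factorial_mul, padicValNat_factorial_mul, ih]
    ring

theorem padicValNat_factorial_prime_pow_succ (N : ℕ) :
    padicValNat p (p ^ (N + 1))! = padicValNat p (p ^ N)! * p + 1 := by
  have hp : padicValNat p p ! = 1 := by simpa using padicValNat_factorial_mul (p := p) 1
  rw [pow_succ, padicValNat_factorial_pow_mul, hp]

theorem padicValNat_factorial_eq_sum_digits_add (t N : ℕ) :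
    padicValNat p t ! =
      ∑ v ∈ Finset.range N, padicValNat p (p ^ v)! * (t / p ^ v % p) +
        padicValNat p (p ^ N * (t / p ^ N))! := by
  induction N with
  | zero => simp
  | succ N ih =>
    set q := t / p ^ N with hq
    have peel : padicValNat p (p ^ N * q)! =
        padicValNat p (p ^ N)! * (q % p) + padicValNat p (p ^ N * (p * (q / p)))! := by
      rw [padicValNat_factorial_pow_mul, padicValNat_factorial_pow_mul,
        padicValNat_mul_div_factorial, ← add_assoc, ← mul_add, Nat.mod_add_div]
    rw [ih, peel, Finset.sum_range_succ, pow_succ, ← Nat.div_div_eq_div_mul, ← hq, mul_assoc,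
      add_assoc]

theorem padicValNat_factorial_eq_sum_digits {t N : ℕ} (h : t < p ^ N) :
    padicValNat p t ! = ∑ v ∈ Finset.range N, padicValNat p (p ^ v)! * (t / p ^ v % p) := by
  simpa [Nat.div_eq_of_lt h] using padicValNat_factorial_eq_sum_digits_add p t N

theorem digit_padicValNat_ne_zero {t : ℕ} (ht : t ≠ 0) : t / p ^ padicValNat p t % p ≠ 0 := by
  intro h
  refine pow_succ_padicValNat_not_dvd (p := p) ht ?_
  rw [pow_succ]
  exact (Nat.dvd_div_iff_mul_dvd pow_padicValNat_dvd).mp (Nat.dvd_of_mod_eq_zero h)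

theorem exists_coprime_and_eq_pow_padicValNat_mul {n : ℕ} (hn : n ≠ 0) :
    ∃ u, p.Coprime u ∧ n = p ^ padicValNat p n * u := by
  rw [← Nat.factorization_def n Fact.out]
  exact ⟨_, Nat.coprime_ordCompl Fact.out hn, (Nat.ordProj_mul_ordCompl_eq_self n p).symm⟩

end FactorialValuation

/-- The divided power algebra on one variable over `R`, realised inside `K[X]` as the polynomials
whose `m`-th coefficient lies in `(1 / m!) R`; it is meant for `R` contained in a field `K` of
characteristic zero. -/
def dividedPowerSubalgebra (R K : Type*) [CommRing R] [CommRing K] [Algebra R K] :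
    Subalgebra R (Polynomial K) where
  carrier := {f | ∀ m, (m ! : K) * f.coeff m ∈ (⊥ : Subalgebra R K)}
  mul_mem' := by
    intro f g hf hg m
    rw [Polynomial.coeff_mul, Finset.mul_sum]
    refine sum_mem fun ⟨a, b⟩ hab => ?_
    obtain rfl := Finset.HasAntidiagonal.mem_antidiagonal.mp hab
    have split : ((a + b)! : K) * (f.coeff a * g.coeff b) =
        ((a + b).choose b : K) * ((a ! * f.coeff a) * (b ! * g.coeff b)) := by
      rw [← Nat.add_choose_mul_factorial_mul_factorial a b]
      push_cast
      ring
    rw [split]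
    exact mul_mem (natCast_mem _ _) (mul_mem (hf a) (hg b))
  add_mem' := by
    intro f g hf hg m
    rw [Polynomial.coeff_add, mul_add]
    exact add_mem (hf m) (hg m)
  algebraMap_mem' := by
    intro r m
    rw [Polynomial.algebraMap_apply, Polynomial.coeff_C]
    split_ifs
    · exact mul_mem (natCast_mem _ _) (Subalgebra.algebraMap_mem _ r)
    · simp

namespace dividedPowerSubalgebra

section

variable {R K : Type*} [CommRing R] [CommRing K] [Algebra R K]

theorem monomial_mem {m : ℕ} {a : K} (h : (m ! : K) * a ∈ (⊥ : Subalgebra R K)) :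
    monomial m a ∈ dividedPowerSubalgebra R K := by
  intro k
  rw [Polynomial.coeff_monomial]
  split_ifs with hk
  · exact hk ▸ h
  · simp

theorem coeff_natCast_mul (n m : ℕ) (f : dividedPowerSubalgebra R K) :
    ((n * f : dividedPowerSubalgebra R K) : Polynomial K).coeff m =
      n * (f : Polynomial K).coeff m := by
  rw [← nsmul_eq_mul, AddSubmonoidClass.coe_nsmul, Polynomial.coeff_smul, nsmul_eq_mul]

end

variable (R K : Type*) [CommRing R] [Field K] [CharZero K] [Algebra R K]
variable (p : ℕ) [Fact p.Prime]

theorem factorial_mul_inv_pow_mem (m : ℕ) :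
    (m ! : K) * ((p : K) ^ padicValNat p m !)⁻¹ ∈ (⊥ : Subalgebra R K) := by
  have hp : (p : K) ≠ 0 := Nat.cast_ne_zero.mpr (NeZero.ne p)
  obtain ⟨u, hu⟩ : p ^ padicValNat p m ! ∣ m ! := pow_padicValNat_dvd
  have hquot : (m ! : K) * ((p : K) ^ padicValNat p m !)⁻¹ = u := by
    rw [mul_inv_eq_iff_eq_mul₀ (pow_ne_zero _ hp), mul_comm]
    exact_mod_cast hu
  exact hquot ▸ natCast_mem _ u

/-- The element `w_m = X^m / p^(v_p(m!))`, which differs from the divided power `X^m / m!` by an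
integer prime to `p`. This normalisation makes the relations between the `w_m` involve only powers
of `p`. -/
def pDividedPower (m : ℕ) : dividedPowerSubalgebra R K :=
  ⟨monomial m ((p : K) ^ padicValNat p m !)⁻¹, monomial_mem (factorial_mul_inv_pow_mem R K p m)⟩

theorem pow_mul_pDividedPower (m : ℕ) :
    (p : dividedPowerSubalgebra R K) ^ padicValNat p m ! * pDividedPower R K p m =
      pDividedPower R K p 1 ^ m := by
  have hp : (p : K) ≠ 0 := Nat.cast_ne_zero.mpr (NeZero.ne p)
  ext k
  rw [← Nat.cast_pow, coeff_natCast_mul]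
  simp [pDividedPower, Polynomial.monomial_pow, Polynomial.coeff_monomial, hp]

variable {R K p} in
theorem eq_pow_mul_pDividedPower {f : dividedPowerSubalgebra R K} {e k m : ℕ}
    (hval : padicValNat p m ! = e + k)
    (hf : (p : dividedPowerSubalgebra R K) ^ e * f = pDividedPower R K p 1 ^ m) :
    f = (p : dividedPowerSubalgebra R K) ^ k * pDividedPower R K p m := by
  have hp : (p : dividedPowerSubalgebra R K) ≠ 0 := Nat.cast_ne_zero.mpr (NeZero.ne p)
  refine mul_left_cancel₀ (pow_ne_zero e hp) ?_
  rw [hf, ← mul_assoc, ← pow_add, ← hval, pow_mul_pDividedPower]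

theorem pDividedPower_one_mul (m : ℕ) :
    pDividedPower R K p 1 * pDividedPower R K p m =
      (p : dividedPowerSubalgebra R K) ^ padicValNat p (m + 1) * pDividedPower R K p (m + 1) := by
  refine eq_pow_mul_pDividedPower
    ((padicValNat_factorial_succ p m).trans (add_comm _ _)) ?_
  rw [mul_left_comm, pow_mul_pDividedPower, pow_succ']

theorem pDividedPower_prime_pow_pow (n : ℕ) :
    pDividedPower R K p (p ^ n) ^ p = p * pDividedPower R K p (p ^ (n + 1)) := by
  rw [← pow_one (p : dividedPowerSubalgebra R K)]
  refine eq_pow_mul_pDividedPower (padicValNat_factorial_prime_pow_succ p n) ?_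
  rw [pow_mul, ← mul_pow, pow_mul_pDividedPower, ← pow_mul, pow_succ]

theorem prod_pDividedPower_digits {t N : ℕ} (h : t < p ^ N) :
    ∏ v ∈ Finset.range N, pDividedPower R K p (p ^ v) ^ (t / p ^ v % p) =
      pDividedPower R K p t := by
  rw [← one_mul (pDividedPower R K p t), ← pow_zero (p : dividedPowerSubalgebra R K)]
  refine eq_pow_mul_pDividedPower
    ((padicValNat_factorial_eq_sum_digits p h).trans (add_zero _).symm) ?_
  rw [← Finset.prod_pow_eq_pow_sum, ← Finset.prod_mul_distrib]
  simp only [pow_mul, ← mul_pow, pow_mul_pDividedPower]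
  simp only [← pow_mul, Finset.prod_pow_eq_pow_sum, sum_range_pow_mul_digit, Nat.mod_eq_of_lt h]

variable {p} in
theorem not_natCast_dvd_pDividedPower [FaithfulSMul R K] (hp : ¬ IsUnit (p : R)) (m : ℕ) :
    ¬ (p : dividedPowerSubalgebra R K) ∣ pDividedPower R K p m := by
  rintro ⟨g, hg⟩
  have hpK : (p : K) ≠ 0 := Nat.cast_ne_zero.mpr (NeZero.ne p)
  obtain ⟨u, hcop, hu⟩ := exists_coprime_and_eq_pow_padicValNat_mul p m.factorial_ne_zero
  obtain ⟨r, hr⟩ : ∃ r, algebraMap R K r = m ! * (g : Polynomial K).coeff m :=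
    Algebra.mem_bot.mp (g.2 m)
  have hcoeff : ((p : K) ^ padicValNat p m !)⁻¹ = p * (g : Polynomial K).coeff m := by
    rw [← coeff_natCast_mul, ← hg]
    exact (Polynomial.coeff_monomial_same m _).symm
  have hunit : (u : K) = p * algebraMap R K r := by
    have hu' : (m ! : K) = p ^ padicValNat p m ! * u := by exact_mod_cast hu
    rw [hr, mul_left_comm, ← hcoeff, hu']
    field_simp
  have hdvd : (p : R) ∣ u :=
    ⟨r, FaithfulSMul.algebraMap_injective R K (by simpa only [map_mul, map_natCast] using hunit)⟩
  exact hp (hcop.cast.isUnit_of_dvd hdvd)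

variable {p} in
theorem pow_mul_pDividedPower_mem_span_iff [FaithfulSMul R K] (hp : ¬ IsUnit (p : R)) {t k : ℕ}
    (ht : t ≠ 0) :
    (p : dividedPowerSubalgebra R K) ^ k * pDividedPower R K p t ∈
        Ideal.span {(p : dividedPowerSubalgebra R K) * pDividedPower R K p 1} ↔
      padicValNat p t < k := by
  obtain ⟨m, rfl⟩ := Nat.exists_eq_succ_of_ne_zero ht
  have hw : pDividedPower R K p 1 ≠ 0 := fun h =>
    not_natCast_dvd_pDividedPower R K hp 1 (h ▸ dvd_zero _)
  rw [Ideal.mem_span_singleton]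
  constructor
  · contrapose!
    intro hk hdvd
    have hdvd_min := hdvd.trans (mul_dvd_mul_right (pow_dvd_pow _ hk) _)
    rw [← pDividedPower_one_mul, mul_comm, mul_dvd_mul_iff_left hw] at hdvd_min
    exact not_natCast_dvd_pDividedPower R K hp m hdvd_min
  · intro hk
    calc (p : dividedPowerSubalgebra R K) * pDividedPower R K p 1
        ∣ p * (pDividedPower R K p 1 * pDividedPower R K p m) :=
          mul_dvd_mul_left _ (dvd_mul_right _ _)
      _ = p ^ (padicValNat p (m + 1) + 1) * pDividedPower R K p (m + 1) := by
          rw [pDividedPower_one_mul, pow_succ', mul_assoc]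
      _ ∣ p ^ k * pDividedPower R K p (m + 1) := mul_dvd_mul_right (pow_dvd_pow _ hk) _

end dividedPowerSubalgebra

section

variable (p : ℕ) [Fact p.Prime]

theorem not_isUnit_natCast_Zloc : ¬ IsUnit (p : Zloc p) := by
  rw [← map_natCast (algebraMap ℤ (Zloc p)),
    IsLocalization.AtPrime.isUnit_to_map_iff _ (Ideal.span {(p : ℤ)})]
  exact fun h => h (Ideal.mem_span_singleton_self _)

/-- The divided power algebra `Γ` over `ℤ_(p)`, inside the polynomials over `ℚ`, which
appears as `FractionRing ℤ` because Mathlib makes that an algebra over `ℤ_(p)`. -/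
abbrev DividedPowersZloc := dividedPowerSubalgebra (Zloc p) (FractionRing ℤ)

/-- The element `w_m` of `Γ`. -/
abbrev pDividedPowerZloc (m : ℕ) : DividedPowersZloc p :=
  dividedPowerSubalgebra.pDividedPower _ _ p m

/-- The ideal `(p w₁)` of `Γ`, which contains the images of the relations `pⁿxₙ`. -/
def pDividedPowerIdeal : Ideal (DividedPowersZloc p) :=
  Ideal.span {(p : DividedPowersZloc p) * pDividedPowerZloc p 1}

theorem pow_mul_pDividedPowerZloc_mem_iff {t k : ℕ} (ht : t ≠ 0) :
    (p : DividedPowersZloc p) ^ k * pDividedPowerZloc p t ∈ pDividedPowerIdeal p ↔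
      padicValNat p t < k :=
  dividedPowerSubalgebra.pow_mul_pDividedPower_mem_span_iff _ _ (not_isUnit_natCast_Zloc p) ht

theorem relIdeal_le_comap_aeval :
    relIdeal p ≤ (pDividedPowerIdeal p).comap
      (aeval (R := Zloc p) fun n => pDividedPowerZloc p (p ^ n)).toRingHom := by
  refine Ideal.span_le.mpr ?_
  rintro _ (⟨n, rfl⟩ | ⟨n, rfl⟩)
  · simpa using (pow_mul_pDividedPowerZloc_mem_iff p (pow_ne_zero n (NeZero.ne p))).mpr
      (by simp : padicValNat p (p ^ n) < n + 1)
  · simp [dividedPowerSubalgebra.pDividedPower_prime_pow_pow]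

/-- The ring map `A → Γ / (p w₁)` that sends `xₙ₊₁` to the class of `w_(pⁿ)`. -/
def toDividedPowersQuotient : Apx p →+* DividedPowersZloc p ⧸ pDividedPowerIdeal p :=
  Ideal.quotientMap _ _ (relIdeal_le_comap_aeval p)

theorem toDividedPowersQuotient_ytil (t : ℕ) :
    toDividedPowersQuotient p (ytil p t) =
      Ideal.Quotient.mk (pDividedPowerIdeal p) (pDividedPowerZloc p t) := by
  have ht : t < p ^ (t + 1) :=
    t.lt_succ_self.trans (Nat.lt_pow_self (Fact.out : p.Prime).one_lt)
  rw [pDividedPowerZloc, ← dividedPowerSubalgebra.prod_pDividedPower_digits _ _ p ht, ytil,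
    toDividedPowersQuotient, Ideal.quotientMap_mk]
  simp

theorem pow_mul_mk_X (n : ℕ) :
    (p : Apx p) ^ (n + 1) * Ideal.Quotient.mk (relIdeal p) (X n) = 0 := by
  have hrel : (p : MvPolynomial ℕ (Zloc p)) ^ (n + 1) * X n ∈ relIdeal p :=
    Ideal.subset_span (Or.inl ⟨n, rfl⟩)
  simpa using Ideal.Quotient.eq_zero_iff_mem.mpr hrel

theorem mk_X_dvd_ytil {t v : ℕ} (hv : v ≤ t) (hdigit : t / p ^ v % p ≠ 0) :
    Ideal.Quotient.mk (relIdeal p) (X v) ∣ ytil p t := by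
  refine map_dvd _ ((dvd_pow_self _ hdigit).trans ?_)
  exact Finset.dvd_prod_of_mem (fun v => X v ^ (t / p ^ v % p))
    (Finset.mem_range_succ_iff.mpr hv)

end

/-- The annihilator of `ỹ_t` in `A` is `(p^(v_p(t)+1))`: `p^(v_p(t)+1) ỹ_t = 0` and
`p^(v_p(t)) ỹ_t ≠ 0`. -/
theorem stmt_16 (p : ℕ) [Fact p.Prime] (t : ℕ) (ht : 1 ≤ t) :
    (p : Apx p) ^ (padicValNat p t + 1) * ytil p t = 0 ∧
    (p : Apx p) ^ (padicValNat p t) * ytil p t ≠ 0 := by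
  have ht0 : t ≠ 0 := Nat.one_le_iff_ne_zero.mp ht
  constructor
  · have hv : padicValNat p t ≤ t := (padicValNat_le_nat_log t).trans (Nat.log_le_self p t)
    obtain ⟨y, hy⟩ := mk_X_dvd_ytil p hv (digit_padicValNat_ne_zero p ht0)
    rw [hy, ← mul_assoc, pow_mul_mk_X, zero_mul]
  · intro h
    have himage := congrArg (toDividedPowersQuotient p) h
    rw [map_mul, map_pow, map_natCast, toDividedPowersQuotient_ytil, map_zero,
      ← map_natCast (Ideal.Quotient.mk (pDividedPowerIdeal p)), ← map_pow, ← map_mul,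
      Ideal.Quotient.eq_zero_iff_mem, pow_mul_pDividedPowerZloc_mem_iff p ht0] at himage
    exact lt_irrefl _ himage

end
end
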